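/- Under the causal model G1, fix 2 ≤ t ≤ t+k ≤ T and an intervention value x* applied only at time t. Let C1 range over configurations c = (x_{t+1:t+k}, w_{t:t+k}, v_{t:t+k}, z_{t−1}, S_{t−1}). Assuming that P(x_t = x*, c) > 0 for every configuration c with P(c) > 0, the interventional marginal satisfies, for every value y: P(y_{t+k} = y | do(x_t = x*)) = Σ_c P(y_{t+k} = y | x_t = x*, c) P(c) = Σ_c [ Σ_{y_{t:t+k−1}, z_{t:t+k}} ∏_{j=t}^{t+k} b_j(y_j | z_j, x_j, v_j, y_{j−1}) a_j(z_j | x_j, w_j, z_{j−1}, y_{j−1}) ] P(c), where in the inner sum y_{t+k} = y is held fixed, x_t = x*, and x_{t+1:t+k} take the values given in c. -/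

import Mathlib

open Finset

/-- A trajectory of the six processes (u, x, v, w, z, y) over times 1..T; index 0 of
`Fin (T+1)` is a dummy time whose value is pinned to `default` by the joint pmf. -/
structure Traj (U X V W Z Y : Type) (T : ℕ) where
  u : Fin (T + 1) → U
  x : Fin (T + 1) → X
  v : Fin (T + 1) → V
  w : Fin (T + 1) → W
  z : Fin (T + 1) → Z
  y : Fin (T + 1) → Y

/-- Trajectories are equivalent to a finite product of function types. -/
def trajEquiv (U X V W Z Y : Type) (T : ℕ) :
    Traj U X V W Z Y T ≃
      (Fin (T + 1) → U) × (Fin (T + 1) → X) × (Fin (T + 1) → V) × (Fin (T + 1) → W) ×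
        (Fin (T + 1) → Z) × (Fin (T + 1) → Y) where
  toFun τ := (τ.u, τ.x, τ.v, τ.w, τ.z, τ.y)
  invFun p := ⟨p.1, p.2.1, p.2.2.1, p.2.2.2.1, p.2.2.2.2.1, p.2.2.2.2.2⟩
  left_inv τ := rfl
  right_inv p := rfl

instance {U X V W Z Y : Type} {T : ℕ}
    [Fintype U] [Fintype X] [Fintype V] [Fintype W] [Fintype Z] [Fintype Y]
    [DecidableEq U] [DecidableEq X] [DecidableEq V] [DecidableEq W] [DecidableEq Z]
    [DecidableEq Y] : Fintype (Traj U X V W Z Y T) :=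
  Fintype.ofEquiv _ (trajEquiv U X V W Z Y T).symm

instance {U X V W Z Y : Type} {T : ℕ}
    [DecidableEq U] [DecidableEq X] [DecidableEq V] [DecidableEq W] [DecidableEq Z]
    [DecidableEq Y] : DecidableEq (Traj U X V W Z Y T) := fun a b =>
  decidable_of_iff
    (a.u = b.u ∧ a.x = b.x ∧ a.v = b.v ∧ a.w = b.w ∧ a.z = b.z ∧ a.y = b.y)
    (by cases a; cases b; simp)

/-- Time index t as an element of `Fin (T+1)` (defined for all naturals via truncation;
only used for t ≤ T). -/
def idx (T t : ℕ) : Fin (T + 1) := ⟨min t T, Nat.lt_succ_of_le (min_le_right t T)⟩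

open Classical in
/-- Probability of an event under a pmf on a finite type. -/
noncomputable def pr {α : Type*} [Fintype α] (p : α → ℝ) (E : α → Prop) : ℝ :=
  ∑ a, if E a then p a else 0

/-- Conditional probability P(E | F) = P(E ∧ F) / P(F). -/
noncomputable def cpr {α : Type*} [Fintype α] (p : α → ℝ) (E F : α → Prop) : ℝ :=
  pr p (fun a => E a ∧ F a) / pr p F

variable {U X V W Z Y : Type}
  [Fintype U] [Fintype X] [Fintype V] [Fintype W] [Fintype Z] [Fintype Y]
  [DecidableEq U] [DecidableEq X] [DecidableEq V] [DecidableEq W] [DecidableEq Z] [DecidableEq Y]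
  [Inhabited U] [Inhabited X] [Inhabited V] [Inhabited W] [Inhabited Z] [Inhabited Y]

/-- Joint pmf of the causal model G1:
P = q_1(u_1) ∏_{t=2}^T q_u(u_t|u_{t-1}) ∏_{t=1}^T q_x(x_t|u_t) q_v(v_t|u_t) q_w(w_t|u_t)
  · a_1(z_1|x_1,w_1) b_1(y_1|z_1,x_1,v_1)
  · ∏_{t=2}^T a_t(z_t|x_t,w_t,z_{t-1},y_{t-1}) b_t(y_t|z_t,x_t,v_t,y_{t-1});
the dummy time-0 coordinates are pinned to `default` so that this is a pmf. -/
noncomputable def jointG1 (T : ℕ)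
    (q1 : U → ℝ) (qu : U → U → ℝ) (qx : X → U → ℝ) (qv : V → U → ℝ) (qw : W → U → ℝ)
    (a1 : Z → X → W → ℝ) (b1 : Y → Z → X → V → ℝ)
    (a : ℕ → Z → X → W → Z → Y → ℝ) (b : ℕ → Y → Z → X → V → Y → ℝ)
    (τ : Traj U X V W Z Y T) : ℝ :=
  (if τ.u (idx T 0) = default ∧ τ.x (idx T 0) = default ∧ τ.v (idx T 0) = default ∧
      τ.w (idx T 0) = default ∧ τ.z (idx T 0) = default ∧ τ.y (idx T 0) = default
    then 1 else 0) *
  (q1 (τ.u (idx T 1)) * ∏ j ∈ Finset.Icc 2 T, qu (τ.u (idx T j)) (τ.u (idx T (j - 1)))) *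
  (∏ j ∈ Finset.Icc 1 T,
    (qx (τ.x (idx T j)) (τ.u (idx T j)) * qv (τ.v (idx T j)) (τ.u (idx T j)) *
      qw (τ.w (idx T j)) (τ.u (idx T j)))) *
  (a1 (τ.z (idx T 1)) (τ.x (idx T 1)) (τ.w (idx T 1)) *
    b1 (τ.y (idx T 1)) (τ.z (idx T 1)) (τ.x (idx T 1)) (τ.v (idx T 1)) *
    ∏ j ∈ Finset.Icc 2 T,
      (a j (τ.z (idx T j)) (τ.x (idx T j)) (τ.w (idx T j)) (τ.z (idx T (j - 1)))
          (τ.y (idx T (j - 1))) *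
        b j (τ.y (idx T j)) (τ.z (idx T j)) (τ.x (idx T j)) (τ.v (idx T j))
          (τ.y (idx T (j - 1)))))

/-- Interventional pmf of G1 under do(x_j = xs j) for j ∈ J: the truncated factorization,
with the factors q_x(x_j | u_j), j ∈ J, deleted and x_j fixed to xs j. -/
noncomputable def doxG1 (T : ℕ) (J : Finset ℕ) (xs : ℕ → X)
    (q1 : U → ℝ) (qu : U → U → ℝ) (qx : X → U → ℝ) (qv : V → U → ℝ) (qw : W → U → ℝ)
    (a1 : Z → X → W → ℝ) (b1 : Y → Z → X → V → ℝ)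
    (a : ℕ → Z → X → W → Z → Y → ℝ) (b : ℕ → Y → Z → X → V → Y → ℝ)
    (τ : Traj U X V W Z Y T) : ℝ :=
  (if τ.u (idx T 0) = default ∧ τ.x (idx T 0) = default ∧ τ.v (idx T 0) = default ∧
      τ.w (idx T 0) = default ∧ τ.z (idx T 0) = default ∧ τ.y (idx T 0) = default
    then 1 else 0) *
  (q1 (τ.u (idx T 1)) * ∏ j ∈ Finset.Icc 2 T, qu (τ.u (idx T j)) (τ.u (idx T (j - 1)))) *
  (∏ j ∈ Finset.Icc 1 T,
    ((if j ∈ J then (if τ.x (idx T j) = xs j then 1 else 0)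
      else qx (τ.x (idx T j)) (τ.u (idx T j))) *
      qv (τ.v (idx T j)) (τ.u (idx T j)) * qw (τ.w (idx T j)) (τ.u (idx T j)))) *
  (a1 (τ.z (idx T 1)) (τ.x (idx T 1)) (τ.w (idx T 1)) *
    b1 (τ.y (idx T 1)) (τ.z (idx T 1)) (τ.x (idx T 1)) (τ.v (idx T 1)) *
    ∏ j ∈ Finset.Icc 2 T,
      (a j (τ.z (idx T j)) (τ.x (idx T j)) (τ.w (idx T j)) (τ.z (idx T (j - 1)))
          (τ.y (idx T (j - 1))) *
        b j (τ.y (idx T j)) (τ.z (idx T j)) (τ.x (idx T j)) (τ.v (idx T j))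
          (τ.y (idx T (j - 1)))))

/-- The event that the trajectory agrees with the given past values
S_{t-1} = (y_{1:t-1}, x_{1:t-1}, v_{1:t-1}, w_{1:t-1}); histories are indexed by `Fin t`
with index j standing for time j (index 0 being the pinned dummy time). -/
def histEv (T t : ℕ) (τ : Traj U X V W Z Y T)
    (hy : Fin t → Y) (hx : Fin t → X) (hv : Fin t → V) (hw : Fin t → W) : Prop :=
  (∀ j : Fin t, τ.y (idx T j.val) = hy j) ∧ (∀ j : Fin t, τ.x (idx T j.val) = hx j) ∧
    (∀ j : Fin t, τ.v (idx T j.val) = hv j) ∧ (∀ j : Fin t, τ.w (idx T j.val) = hw j)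

/-- Extend a tuple g of intermediate values (index i of `Fin k` is time t+i, for a block
of times t..t+k) by a fixed value `last` at the final index. -/
def extWith {β : Type*} (k : ℕ) (g : Fin k → β) (last : β) (i : Fin (k + 1)) : β :=
  if h : i.val < k then g ⟨i.val, h⟩ else last

/-- The "previous value" map for a block of times t..t+k: at the first index it is
`first` (the value at time t-1), and at index i ≥ 1 it is g (i-1). -/
def shiftFirst {β : Type*} (k : ℕ) (first : β) (g : Fin k → β) (i : Fin (k + 1)) : β :=
  if h : i.val = 0 then first else g ⟨i.val - 1, by have := i.isLt; omega⟩

/-!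
Once the exogenous paths `u`, `v`, `w`, `x` are fixed, `(z, y)` is a Markov chain, and each of the
laws `P` and `P(· | do(x_t = x*))` is a weight of the exogenous paths times the path weight of this
chain. By the Markov property at time `t`, the conditional probability of `y_{t+k} = y` given
`x_t = x*` and `C1 = c` is under both laws the sum `F c` over the paths of the chain during
`t, …, t + k`. The law `P(· | do(x_t = x*))` is carried by `x_t = x*`, and the two laws give the
same probability to `C1 = c`, because `C1` involves neither `x_t` nor any `(z_j, y_j)` with `j ≥ t`:
the future steps of the chain sum to one, and then so does the only factor containing `x_t`. Hence
both sides equal `∑ c, F c * P(c)`.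
-/

section FiniteSums

theorem sum_apply_mul_eq_of_sum_eq {ι α R : Type*} [Fintype ι] [DecidableEq ι] [Fintype α]
    [CommSemiring R] (i : ι) {f g : α → R} (hfg : ∑ a, f a = ∑ a, g a) {r : (ι → α) → R}
    (hr : DependsOn r {i}ᶜ) : ∑ x, f (x i) * r x = ∑ x, g (x i) * r x := by
  obtain ⟨ρ, hρ⟩ : ∃ ρ : ({j // j ≠ i} → α) → R, ∀ x, r x = ρ fun j ↦ x j :=
    (dependsOn_iff_exists_comp.1 hr).imp fun _ h ↦ congrFun h
  have split (h : α → R) : ∑ x, h (x i) * r x = (∑ a, h a) * ∑ y, ρ y := by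
    rw [Fintype.sum_mul_sum, ← Fintype.sum_prod_type']
    exact Fintype.sum_equiv (Equiv.funSplitAt i α) _ _ fun x ↦ by rw [hρ]; rfl
  rw [split, split, hfg]

end FiniteSums

section Probability

variable {α β : Type*} [Fintype α] [Fintype β]

theorem pr_nonneg {p : α → ℝ} (hp : ∀ a, 0 ≤ p a) (E : α → Prop) : 0 ≤ pr p E :=
  sum_nonneg fun a _ ↦ by split_ifs <;> simp [hp a]

theorem pr_const_mul (c : ℝ) (p : α → ℝ) (E : α → Prop) :
    pr (fun a ↦ c * p a) E = c * pr p E := by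
  rw [pr, pr, mul_sum]
  exact sum_congr rfl fun a _ ↦ by split_ifs <;> simp

theorem pr_congr_of_support {p : α → ℝ} {E F : α → Prop} (h : ∀ a, p a ≠ 0 → (E a ↔ F a)) :
    pr p E = pr p F := by
  refine sum_congr rfl fun a _ ↦ ?_
  rcases eq_or_ne (p a) 0 with ha | ha
  · simp [ha]
  · rw [propext (h a ha)]

theorem pr_comp_equiv (e : α ≃ β) (p : β → ℝ) (E : β → Prop) :
    pr (p ∘ e) (E ∘ e) = pr p E :=
  e.sum_comp fun b ↦ open Classical in if E b then p b else 0

theorem pr_prod (p : α × β → ℝ) (E : α × β → Prop) :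
    pr p E = ∑ a, pr (fun b ↦ p (a, b)) (fun b ↦ E (a, b)) :=
  Fintype.sum_prod_type _

theorem pr_eq_sum_pr_and_eq (p : α → ℝ) (E : α → Prop) (X : α → β) :
    pr p E = ∑ c, pr p (fun a ↦ E a ∧ X a = c) := by
  classical
  simp only [pr]
  rw [sum_comm]
  exact sum_congr rfl fun a _ ↦ by by_cases h : E a <;> simp [h]

theorem cpr_mul_eq_of_pr_and_eq {p : α → ℝ} {E F : α → Prop} {q r : ℝ}
    (hEF : pr p (fun a ↦ E a ∧ F a) = q * pr p F) (hr : 0 ≤ r) (hF : 0 < r → 0 < pr p F) :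
    cpr p E F * r = q * r := by
  rcases hr.eq_or_lt with rfl | hr
  · simp
  · rw [cpr, hEF, mul_div_cancel_right₀ _ (hF hr).ne']

end Probability

section PathWeight

variable {S R : Type*} [CommSemiring R]

/-- The weight `∏ κ i (s i) (s (i - 1))` that a time-inhomogeneous Markov chain started from `s₀`
with transition matrices `κ 0, κ 1, …` gives to the path `s`. As in the factors of the model, the
new state is the first state argument of `κ i` and the previous one is the second. -/
def pathWeight (κ : ℕ → S → S → R) (s₀ : S) {n : ℕ} (s : Fin n → S) : R :=
  ∏ i : Fin n, κ i (s i) ((Fin.cons s₀ s : Fin (n + 1) → S) i.castSucc)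

theorem pathWeight_snoc (κ : ℕ → S → S → R) (s₀ : S) {n : ℕ} (s : Fin n → S) (a : S) :
    pathWeight κ s₀ (Fin.snoc s a : Fin (n + 1) → S) =
      pathWeight κ s₀ s * κ n a ((Fin.cons s₀ s : Fin (n + 1) → S) (Fin.last n)) := by
  simp [pathWeight, Fin.prod_univ_castSucc, Fin.cons_snoc_eq_snoc_cons]

theorem cons_append_castAdd (s₀ : S) {m n : ℕ} (p : Fin m → S) (q : Fin n → S)
    (i : Fin (m + 1)) :
    (Fin.cons s₀ (Fin.append p q) : Fin (m + n + 1) → S) (i.castLE (by omega)) =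
      (Fin.cons s₀ p : Fin (m + 1) → S) i := by
  cases i using Fin.cases with
  | zero => rfl
  | succ i => exact Fin.append_left p q i

theorem cons_append_natAdd (s₀ : S) {m n : ℕ} (p : Fin m → S) (q : Fin n → S)
    (i : Fin (n + 1)) :
    (Fin.cons s₀ (Fin.append p q) : Fin (m + n + 1) → S) (Fin.natAdd m i) =
      (Fin.cons ((Fin.cons s₀ p : Fin (m + 1) → S) (Fin.last m)) q : Fin (n + 1) → S) i := by
  cases i using Fin.cases with
  | zero => exact cons_append_castAdd s₀ p q (Fin.last m)
  | succ i => exact Fin.append_right p q i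

theorem pathWeight_append (κ : ℕ → S → S → R) (s₀ : S) {m n : ℕ} (p : Fin m → S)
    (q : Fin n → S) :
    pathWeight κ s₀ (Fin.append p q) = pathWeight κ s₀ p *
      pathWeight (fun j ↦ κ (m + j)) ((Fin.cons s₀ p : Fin (m + 1) → S) (Fin.last m)) q := by
  rw [pathWeight, Fin.prod_univ_add]
  congr 1
  · refine prod_congr rfl fun i _ ↦ ?_
    rw [Fin.append_left, ← cons_append_castAdd s₀ p q]
    rfl
  · refine prod_congr rfl fun i _ ↦ ?_
    rw [Fin.append_right, ← cons_append_natAdd s₀ p q]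
    rfl

end PathWeight

theorem eq_exists_take_eq_take_and {S : Type*} {N t : ℕ} {E : (Fin N → S) → Prop}
    (hE : DependsOn E {i | i.val < t}) (h : t ≤ N) :
    E = fun s ↦ ∃ s', Fin.take t h s' = Fin.take t h s ∧ E s' := by
  refine funext fun s ↦ propext ⟨fun hs ↦ ⟨s, rfl, hs⟩, fun ⟨s', hs', hs'E⟩ ↦ ?_⟩
  rwa [← hE fun i hi ↦ congrFun hs' ⟨i, hi⟩]

section PathProbability

variable {S : Type*} [Fintype S] {κ κ' : ℕ → S → S → ℝ} {N t n : ℕ}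

theorem pr_pathWeight_init (hκ : ∀ s, ∑ s', κ n s' s = 1) (s₀ : S) (E : (Fin n → S) → Prop) :
    pr (pathWeight κ s₀) (fun s : Fin (n + 1) → S ↦ E (Fin.init s)) = pr (pathWeight κ s₀) E := by
  rw [← pr_comp_equiv (Fin.snocEquiv fun _ ↦ S), pr, pr, Fintype.sum_prod_type_right]
  refine sum_congr rfl fun s _ ↦ ?_
  by_cases hs : E s
  · simp [Fin.snocEquiv, hs, pathWeight_snoc, ← mul_sum, hκ]
  · simp [Fin.snocEquiv, hs]

theorem pr_pathWeight_take (h : t ≤ N) (hκ : ∀ j, t ≤ j → j < N → ∀ s, ∑ s', κ j s' s = 1)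
    (s₀ : S) (E : (Fin t → S) → Prop) :
    pr (pathWeight κ s₀) (fun s : Fin N → S ↦ E (Fin.take t h s)) = pr (pathWeight κ s₀) E := by
  induction N, h using Nat.le_induction with
  | base => rfl
  | succ N h ih =>
    rw [← ih fun j htj hjN ↦ hκ j htj (by omega)]
    exact pr_pathWeight_init (hκ N h (by omega)) s₀ fun s ↦ E (Fin.take t h s)

theorem pr_pathWeight_append (s₀ : S) (E : (Fin (t + n) → S) → Prop) :
    pr (pathWeight κ s₀) E = ∑ p : Fin t → S, pathWeight κ s₀ p *
      pr (pathWeight (fun j ↦ κ (t + j)) ((Fin.cons s₀ p : Fin (t + 1) → S) (Fin.last t)))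
        (fun q ↦ E (Fin.append p q)) := by
  rw [← pr_comp_equiv (Fin.appendEquiv t n), pr_prod]
  refine sum_congr rfl fun p _ ↦ ?_
  rw [← pr_const_mul]
  congr! 2 with q
  exact pathWeight_append κ s₀ p q

theorem pr_pathWeight_congr (h : t ≤ N) (hκ : ∀ j, t ≤ j → j < N → ∀ s, ∑ s', κ j s' s = 1)
    (hκ' : ∀ j, t ≤ j → j < N → ∀ s, ∑ s', κ' j s' s = 1) (hκκ' : ∀ j < t, κ j = κ' j) (s₀ : S)
    {E : (Fin N → S) → Prop} (hE : DependsOn E {i | i.val < t}) :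
    pr (pathWeight κ s₀) E = pr (pathWeight κ' s₀) E := by
  have hw : (pathWeight κ s₀ : (Fin t → S) → ℝ) = pathWeight κ' s₀ :=
    funext fun p ↦ prod_congr rfl fun i _ ↦ by rw [hκκ' i i.isLt]
  rw [eq_exists_take_eq_take_and hE h,
    pr_pathWeight_take h hκ s₀ fun p ↦ ∃ s', Fin.take t h s' = p ∧ E s',
    pr_pathWeight_take h hκ' s₀ fun p ↦ ∃ s', Fin.take t h s' = p ∧ E s', hw]

theorem pr_pathWeight_natAdd_and_take (s₀ : S) {D : (Fin n → S) → Prop} {E : (Fin t → S) → Prop}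
    {q : ℝ} (hD : ∀ p, E p → pr (pathWeight (fun j ↦ κ (t + j))
      ((Fin.cons s₀ p : Fin (t + 1) → S) (Fin.last t))) D = q) :
    pr (pathWeight κ s₀) (fun s : Fin (t + n) → S ↦
        D (fun i ↦ s (Fin.natAdd t i)) ∧ E (Fin.take t (Nat.le_add_right t n) s)) =
      q * pr (pathWeight κ s₀) E := by
  rw [pr_pathWeight_append, pr, mul_sum]
  refine sum_congr rfl fun p _ ↦ ?_
  have htake (r : Fin n → S) : Fin.take t (Nat.le_add_right t n) (Fin.append p r) = p :=
    funext fun i ↦ Fin.append_left p r i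
  simp only [Fin.append_right, htake]
  by_cases hp : E p
  · simp [hp, hD p hp, mul_comm]
  · simp [hp, pr]

theorem pr_pathWeight_and_eq_mul (h : t + n ≤ N)
    (hκ : ∀ j, t ≤ j → j < N → ∀ s, ∑ s', κ j s' s = 1) (s₀ : S)
    {E : (Fin N → S) → Prop} (hE : DependsOn E {i | i.val < t})
    {D : (Fin n → S) → Prop} {q : ℝ}
    (hD : ∀ s, E s → pr (pathWeight (fun j ↦ κ (t + j))
      ((Fin.cons s₀ s : Fin (N + 1) → S) ⟨t, by omega⟩)) D = q) :
    pr (pathWeight κ s₀) (fun s ↦ D (fun i ↦ s ((Fin.natAdd t i).castLE h)) ∧ E s) =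
      q * pr (pathWeight κ s₀) E := by
  have htN : t ≤ N := by omega
  have hD' (p : Fin t → S) (hp : ∃ s, Fin.take t htN s = p ∧ E s) :
      pr (pathWeight (fun j ↦ κ (t + j)) ((Fin.cons s₀ p : Fin (t + 1) → S) (Fin.last t))) D =
        q := by
    obtain ⟨s, rfl, hs⟩ := hp
    rw [← hD s hs]
    cases t <;> rfl
  rw [eq_exists_take_eq_take_and hE htN,
    pr_pathWeight_take htN hκ s₀ fun p ↦ ∃ s, Fin.take t htN s = p ∧ E s,
    ← pr_pathWeight_natAdd_and_take s₀ hD']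
  exact pr_pathWeight_take h (fun j htj ↦ hκ j (by omega)) s₀ fun s ↦
    D (fun i ↦ s (Fin.natAdd t i)) ∧ ∃ s', Fin.take t htN s' = Fin.take t (by omega) s ∧ E s'

end PathProbability

section Index

variable {T i j : ℕ}

theorem idx_val (h : j ≤ T) : (idx T j).val = j := min_eq_left h

theorem idx_ne_idx (hi : i ≤ T) (hj : j ≤ T) (h : i ≠ j) : idx T i ≠ idx T j := fun hij ↦
  h (by rw [← idx_val hi, hij, idx_val hj])

theorem pathWeight_eq_prod_Icc {S R : Type*} [CommSemiring R] (κ : ℕ → S → S → R) (s₀ : S)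
    (s : Fin (T + 1) → S) :
    pathWeight κ s₀ s =
      κ 0 (s (idx T 0)) s₀ * ∏ j ∈ Icc 1 T, κ j (s (idx T j)) (s (idx T (j - 1))) := by
  rw [pathWeight, Fin.prod_univ_succ, ← Ico_add_one_right_eq_Icc, prod_Ico_eq_prod_range,
    ← Fin.prod_univ_eq_prod_range (fun j ↦
      κ (1 + j) (s (idx T (1 + j))) (s (idx T (1 + j - 1)))), Nat.add_sub_cancel]
  congr 1
  refine prod_congr rfl fun i _ ↦ ?_
  have hsucc : idx T (1 + i) = i.succ :=
    Fin.ext ((idx_val (by omega)).trans (add_comm 1 i.val))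
  have hcast : idx T (1 + i - 1) = i.castSucc :=
    Fin.ext ((idx_val (by omega)).trans (Nat.add_sub_cancel_left 1 i.val))
  rw [hsucc, hcast, ← Fin.succ_castSucc, Fin.cons_succ, Fin.val_succ, add_comm]

end Index

section Endogenous

variable {X V W Z Y : Type} [DecidableEq Z] [DecidableEq Y] [Inhabited Z] [Inhabited Y] {T j : ℕ}
  {a1 : Z → X → W → ℝ} {b1 : Y → Z → X → V → ℝ}
  {a : ℕ → Z → X → W → Z → Y → ℝ} {b : ℕ → Y → Z → X → V → Y → ℝ}
  {v : Fin (T + 1) → V} {w : Fin (T + 1) → W} {x x' : Fin (T + 1) → X}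

/-- The transition matrices of the Markov chain formed by `(z, y)` once the paths `v`, `w`, `x` are
fixed; the matrix of time `0` pins the dummy coordinates. -/
def zyKernel (T : ℕ) (a1 : Z → X → W → ℝ) (b1 : Y → Z → X → V → ℝ)
    (a : ℕ → Z → X → W → Z → Y → ℝ) (b : ℕ → Y → Z → X → V → Y → ℝ)
    (v : Fin (T + 1) → V) (w : Fin (T + 1) → W) (x : Fin (T + 1) → X) :
    ℕ → Z × Y → Z × Y → ℝ
  | 0, s, _ => if s.1 = default ∧ s.2 = default then 1 else 0
  | 1, s, _ => a1 s.1 (x (idx T 1)) (w (idx T 1)) * b1 s.2 s.1 (x (idx T 1)) (v (idx T 1))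
  | j + 2, s, r => a (j + 2) s.1 (x (idx T (j + 2))) (w (idx T (j + 2))) r.1 r.2 *
      b (j + 2) s.2 s.1 (x (idx T (j + 2))) (v (idx T (j + 2))) r.2

theorem zyKernel_of_two_le (hj : 2 ≤ j) (s r : Z × Y) :
    zyKernel T a1 b1 a b v w x j s r = a j s.1 (x (idx T j)) (w (idx T j)) r.1 r.2 *
      b j s.2 s.1 (x (idx T j)) (v (idx T j)) r.2 := by
  obtain ⟨j, rfl⟩ := Nat.exists_eq_add_of_le' hj
  rfl

theorem zyKernel_congr (h : x (idx T j) = x' (idx T j)) :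
    zyKernel T a1 b1 a b v w x j = zyKernel T a1 b1 a b v w x' j := by
  ext s r
  match j with
  | 0 => rfl
  | 1 => simp only [zyKernel, h]
  | j + 2 => simp only [zyKernel, h]

theorem sum_zyKernel [Fintype Z] [Fintype Y] (ha1 : ∀ x w, ∑ z, a1 z x w = 1)
    (hb1 : ∀ z x v, ∑ y, b1 y z x v = 1)
    (ha : ∀ j, 2 ≤ j → j ≤ T → ∀ x w z' y', ∑ z, a j z x w z' y' = 1)
    (hb : ∀ j, 2 ≤ j → j ≤ T → ∀ z x v y', ∑ y, b j y z x v y' = 1) (hj : j ≤ T) (r : Z × Y) :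
    ∑ s, zyKernel T a1 b1 a b v w x j s r = 1 := by
  match j with
  | 0 => simp [zyKernel, Fintype.sum_prod_type, ite_and]
  | 1 => simp [zyKernel, Fintype.sum_prod_type, ← mul_sum, ha1, hb1]
  | j + 2 =>
    simp [zyKernel, Fintype.sum_prod_type, ← mul_sum, ha (j + 2) (by omega) hj,
      hb (j + 2) (by omega) hj]

theorem pathWeight_zyKernel (hT : 1 ≤ T) (r : Z × Y) (s : Fin (T + 1) → Z × Y) :
    pathWeight (zyKernel T a1 b1 a b v w x) r s =
      (if (s (idx T 0)).1 = default ∧ (s (idx T 0)).2 = default then 1 else 0) *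
      (a1 (s (idx T 1)).1 (x (idx T 1)) (w (idx T 1)) *
        b1 (s (idx T 1)).2 (s (idx T 1)).1 (x (idx T 1)) (v (idx T 1)) *
        ∏ j ∈ Icc 2 T, (a j (s (idx T j)).1 (x (idx T j)) (w (idx T j)) (s (idx T (j - 1))).1
            (s (idx T (j - 1))).2 *
          b j (s (idx T j)).2 (s (idx T j)).1 (x (idx T j)) (v (idx T j))
            (s (idx T (j - 1))).2)) := by
  rw [pathWeight_eq_prod_Icc, ← mul_prod_Ioc_eq_prod_Icc hT]
  congr 2
  exact prod_congr rfl fun j hj ↦ zyKernel_of_two_le (mem_Icc.1 hj).1 _ _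

end Endogenous

section Exogenous

variable {U X V W : Type} {T t : ℕ} {J : Finset ℕ} {xs : ℕ → X} {qx : X → U → ℝ}

/-- The factor of `x_j` in the model with the intervention `do(x_j = xs j)`, `j ∈ J`. -/
def xFactor [DecidableEq X] (J : Finset ℕ) (xs : ℕ → X) (qx : X → U → ℝ) (j : ℕ) (x : X) (u : U) :
    ℝ :=
  if j ∈ J then (if x = xs j then 1 else 0) else qx x u

theorem sum_xFactor [Fintype X] [DecidableEq X] (hqx : ∀ u, ∑ x, qx x u = 1) (j : ℕ) (u : U) :
    ∑ x, xFactor J xs qx j x u = 1 := by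
  unfold xFactor
  split_ifs <;> simp [hqx]

theorem xFactor_insert_of_ne [DecidableEq X] {j : ℕ} (hj : j ≠ t) :
    xFactor (insert t J) xs qx j = xFactor J xs qx j := by
  simp [funext_iff, xFactor, hj]

variable [DecidableEq U] [DecidableEq X] [DecidableEq V] [DecidableEq W]
  [Inhabited U] [Inhabited X] [Inhabited V] [Inhabited W] {f g : ℕ → X → U → ℝ}
  {q1 : U → ℝ} {qu : U → U → ℝ} {qv : V → U → ℝ} {qw : W → U → ℝ}
  {u : Fin (T + 1) → U} {v : Fin (T + 1) → V} {w : Fin (T + 1) → W}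

/-- The weight of the exogenous paths when the factor of `x_j` is `f j`. -/
def exoWeight (T : ℕ) (f : ℕ → X → U → ℝ) (q1 : U → ℝ) (qu : U → U → ℝ) (qv : V → U → ℝ)
    (qw : W → U → ℝ) (u : Fin (T + 1) → U) (v : Fin (T + 1) → V) (w : Fin (T + 1) → W)
    (x : Fin (T + 1) → X) : ℝ :=
  (if u (idx T 0) = default ∧ x (idx T 0) = default ∧ v (idx T 0) = default ∧
      w (idx T 0) = default then 1 else 0) *
  (q1 (u (idx T 1)) * ∏ j ∈ Icc 2 T, qu (u (idx T j)) (u (idx T (j - 1)))) *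
  ∏ j ∈ Icc 1 T, (f j (x (idx T j)) (u (idx T j)) * qv (v (idx T j)) (u (idx T j)) *
    qw (w (idx T j)) (u (idx T j)))

theorem exoWeight_eq_mul (ht : 1 ≤ t) (htT : t ≤ T) (hfg : ∀ j ≠ t, f j = g j) (hg : g t = 1)
    (x : Fin (T + 1) → X) :
    exoWeight T f q1 qu qv qw u v w x =
      f t (x (idx T t)) (u (idx T t)) * exoWeight T g q1 qu qv qw u v w x := by
  have ht' : t ∈ Icc 1 T := mem_Icc.2 ⟨ht, htT⟩
  have hrest : ∏ j ∈ (Icc 1 T).erase t, (f j (x (idx T j)) (u (idx T j)) *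
        qv (v (idx T j)) (u (idx T j)) * qw (w (idx T j)) (u (idx T j))) =
      ∏ j ∈ (Icc 1 T).erase t, (g j (x (idx T j)) (u (idx T j)) *
        qv (v (idx T j)) (u (idx T j)) * qw (w (idx T j)) (u (idx T j))) :=
    prod_congr rfl fun j hj ↦ by rw [hfg j (ne_of_mem_erase hj)]
  simp only [exoWeight, ← mul_prod_erase _ _ ht', hrest, hg, Pi.one_apply]
  ring

theorem dependsOn_exoWeight (ht : 1 ≤ t) (htT : t ≤ T) (hf : f t = 1) :
    DependsOn (exoWeight T f q1 qu qv qw u v w) {idx T t}ᶜ := by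
  intro x x' h
  have hx (j : ℕ) (hj : j ≤ T) (hjt : j ≠ t) : x (idx T j) = x' (idx T j) :=
    h _ (idx_ne_idx hj htT hjt)
  rw [exoWeight, exoWeight, hx 0 (Nat.zero_le T) (by omega)]
  congr 1
  refine prod_congr rfl fun j hj ↦ ?_
  rcases eq_or_ne j t with rfl | hjt
  · simp only [hf, Pi.one_apply]
  · rw [hx j (mem_Icc.1 hj).2 hjt]

end Exogenous

section Trajectories

variable {U X V W Z Y : Type} {T : ℕ}

/-- The trajectory with the given paths, the endogenous processes `z` and `y` being merged into a
single path `s`. -/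
def Traj.ofPaths (u : Fin (T + 1) → U) (v : Fin (T + 1) → V) (w : Fin (T + 1) → W)
    (x : Fin (T + 1) → X) (s : Fin (T + 1) → Z × Y) : Traj U X V W Z Y T :=
  ⟨u, x, v, w, fun i ↦ (s i).1, fun i ↦ (s i).2⟩

/-- Splitting a trajectory into its exogenous paths `u`, `v`, `w`, `x` and its endogenous one. -/
def Traj.pathsEquiv (U X V W Z Y : Type) (T : ℕ) :
    Traj U X V W Z Y T ≃ (Fin (T + 1) → U) × (Fin (T + 1) → V) × (Fin (T + 1) → W) ×
      (Fin (T + 1) → X) × (Fin (T + 1) → Z × Y) where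
  toFun τ := (τ.u, τ.v, τ.w, τ.x, fun i ↦ (τ.z i, τ.y i))
  invFun p := .ofPaths p.1 p.2.1 p.2.2.1 p.2.2.2.1 p.2.2.2.2
  left_inv _ := rfl
  right_inv _ := rfl

/-- The event `E` is determined by the exogenous paths and by `(z, y)` at times before `t`. -/
def DependsOnPast (t : ℕ) (E : Traj U X V W Z Y T → Prop) : Prop :=
  ∀ u v w x, DependsOn (fun s ↦ E (.ofPaths u v w x s)) {i | i.val < t}

/-- The event `E` does not involve the coordinate `x_t`. -/
def FreeOfX (t : ℕ) (E : Traj U X V W Z Y T → Prop) : Prop :=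
  ∀ u v w s, DependsOn (fun x ↦ E (.ofPaths u v w x s)) {idx T t}ᶜ

variable [DecidableEq U] [DecidableEq X] [DecidableEq V] [DecidableEq W] [DecidableEq Z]
  [DecidableEq Y]

theorem pr_traj [Fintype U] [Fintype X] [Fintype V] [Fintype W] [Fintype Z] [Fintype Y]
    (p : Traj U X V W Z Y T → ℝ) (E : Traj U X V W Z Y T → Prop) :
    pr p E = ∑ u, ∑ v, ∑ w, ∑ x,
      pr (fun s ↦ p (.ofPaths u v w x s)) (fun s ↦ E (.ofPaths u v w x s)) := by
  rw [← pr_comp_equiv (Traj.pathsEquiv U X V W Z Y T).symm]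
  simp only [pr_prod]
  rfl

end Trajectories

section Model

variable {U X V W Z Y : Type}
  [DecidableEq U] [DecidableEq X] [DecidableEq V] [DecidableEq W] [DecidableEq Z] [DecidableEq Y]
  [Inhabited U] [Inhabited X] [Inhabited V] [Inhabited W] [Inhabited Z] [Inhabited Y]
  {T t n : ℕ} {J : Finset ℕ} {xs : ℕ → X}
  {q1 : U → ℝ} {qu : U → U → ℝ} {qx : X → U → ℝ} {qv : V → U → ℝ} {qw : W → U → ℝ}
  {a1 : Z → X → W → ℝ} {b1 : Y → Z → X → V → ℝ}
  {a : ℕ → Z → X → W → Z → Y → ℝ} {b : ℕ → Y → Z → X → V → Y → ℝ}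

theorem jointG1_nonneg (hq1 : ∀ u, 0 ≤ q1 u) (hqu : ∀ u' u, 0 ≤ qu u u')
    (hqx : ∀ u x, 0 ≤ qx x u) (hqv : ∀ u v, 0 ≤ qv v u) (hqw : ∀ u w, 0 ≤ qw w u)
    (ha1 : ∀ x w z, 0 ≤ a1 z x w) (hb1 : ∀ z x v y, 0 ≤ b1 y z x v)
    (ha : ∀ j, 2 ≤ j → j ≤ T → ∀ x w z' y' z, 0 ≤ a j z x w z' y')
    (hb : ∀ j, 2 ≤ j → j ≤ T → ∀ z x v y' y, 0 ≤ b j y z x v y') (τ : Traj U X V W Z Y T) :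
    0 ≤ jointG1 T q1 qu qx qv qw a1 b1 a b τ := by
  refine mul_nonneg (mul_nonneg (mul_nonneg ?_ (mul_nonneg (hq1 _) ?_)) ?_)
    (mul_nonneg (mul_nonneg (ha1 _ _ _) (hb1 _ _ _ _)) ?_)
  · split_ifs <;> norm_num
  · exact prod_nonneg fun j _ ↦ hqu _ _
  · exact prod_nonneg fun j _ ↦ mul_nonneg (mul_nonneg (hqx _ _) (hqv _ _)) (hqw _ _)
  · refine prod_nonneg fun j hj ↦ ?_
    obtain ⟨h2j, hjT⟩ := mem_Icc.1 hj
    exact mul_nonneg (ha j h2j hjT _ _ _ _ _) (hb j h2j hjT _ _ _ _ _)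

theorem doxG1_empty : doxG1 T ∅ xs q1 qu qx qv qw a1 b1 a b =
    jointG1 T q1 qu qx qv qw a1 b1 a b := by
  funext τ
  simp only [doxG1, jointG1, notMem_empty, if_false]

theorem x_eq_of_doxG1_ne_zero (ht : 1 ≤ t) (htT : t ≤ T) (htJ : t ∈ J) {τ : Traj U X V W Z Y T}
    (hτ : doxG1 T J xs q1 qu qx qv qw a1 b1 a b τ ≠ 0) : τ.x (idx T t) = xs t := by
  have hprod := right_ne_zero_of_mul (left_ne_zero_of_mul hτ)
  have hx := prod_ne_zero_iff.1 hprod t (mem_Icc.2 ⟨ht, htT⟩)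
  by_contra h
  simp [htJ, h] at hx

theorem doxG1_ofPaths (hT : 1 ≤ T) (u : Fin (T + 1) → U) (v : Fin (T + 1) → V)
    (w : Fin (T + 1) → W) (x : Fin (T + 1) → X) (s : Fin (T + 1) → Z × Y) :
    doxG1 T J xs q1 qu qx qv qw a1 b1 a b (.ofPaths u v w x s) =
      exoWeight T (xFactor J xs qx) q1 qu qv qw u v w x *
        pathWeight (zyKernel T a1 b1 a b v w x) default s := by
  have hpin (A B C D E F : Prop) [Decidable A] [Decidable B] [Decidable C] [Decidable D]
      [Decidable E] [Decidable F] : (if A ∧ B ∧ C ∧ D ∧ E ∧ F then (1 : ℝ) else 0) =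
        (if A ∧ B ∧ C ∧ D then 1 else 0) * (if E ∧ F then 1 else 0) := by
    rw [ite_zero_mul_ite_zero, mul_one]
    simp only [and_assoc]
  rw [pathWeight_zyKernel hT, doxG1, exoWeight, hpin]
  have hcomm (p r A B C : ℝ) : p * r * A * B * C = p * A * B * (r * C) := by ring
  exact hcomm ..

variable [Fintype U] [Fintype X] [Fintype V] [Fintype W] [Fintype Z] [Fintype Y]
  {E : Traj U X V W Z Y T → Prop}

theorem pr_doxG1 (hT : 1 ≤ T) :
    pr (doxG1 T J xs q1 qu qx qv qw a1 b1 a b) E =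
      ∑ u, ∑ v, ∑ w, ∑ x, exoWeight T (xFactor J xs qx) q1 qu qv qw u v w x *
        pr (pathWeight (zyKernel T a1 b1 a b v w x) default) (fun s ↦ E (.ofPaths u v w x s)) := by
  simp only [pr_traj, doxG1_ofPaths hT, pr_const_mul]

theorem pr_doxG1_and_eq_mul (ht : 1 ≤ t) (htT : t ≤ T) (hn : t + n ≤ T + 1)
    (ha1 : ∀ x w, ∑ z, a1 z x w = 1) (hb1 : ∀ z x v, ∑ y, b1 y z x v = 1)
    (ha : ∀ j, 2 ≤ j → j ≤ T → ∀ x w z' y', ∑ z, a j z x w z' y' = 1)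
    (hb : ∀ j, 2 ≤ j → j ≤ T → ∀ z x v y', ∑ y, b j y z x v y' = 1)
    (hE : DependsOnPast t E) {D : (Fin n → Z × Y) → Prop} {q : ℝ}
    (hD : ∀ τ, E τ → pr (pathWeight (fun j ↦ zyKernel T a1 b1 a b τ.v τ.w τ.x (t + j))
      (τ.z (idx T (t - 1)), τ.y (idx T (t - 1)))) D = q) :
    pr (doxG1 T J xs q1 qu qx qv qw a1 b1 a b)
        (fun τ ↦ D (fun i ↦ (τ.z (idx T (t + i)), τ.y (idx T (t + i)))) ∧ E τ) =
      q * pr (doxG1 T J xs q1 qu qx qv qw a1 b1 a b) E := by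
  simp only [pr_doxG1 (ht.trans htT), mul_sum]
  refine sum_congr rfl fun u _ ↦ sum_congr rfl fun v _ ↦ sum_congr rfl fun w _ ↦
    sum_congr rfl fun x _ ↦ ?_
  have hblock (s : Fin (T + 1) → Z × Y) (i : Fin n) :
      s (idx T (t + i)) = s ((Fin.natAdd t i).castLE hn) :=
    congrArg s (Fin.ext (idx_val (by omega)))
  have hprev (s : Fin (T + 1) → Z × Y) :
      (Fin.cons default s : Fin (T + 2) → Z × Y) ⟨t, by omega⟩ = s (idx T (t - 1)) := by
    obtain ⟨m, rfl⟩ := Nat.exists_eq_add_of_le' ht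
    exact congrArg s (Fin.ext (idx_val (by omega)).symm)
  rw [mul_left_comm, ← pr_pathWeight_and_eq_mul hn
    (fun j _ hj ↦ sum_zyKernel ha1 hb1 ha hb (by omega)) default (hE u v w x) (D := D)
    fun s hs ↦ by rw [hprev]; exact hD _ hs]
  simp only [Traj.ofPaths, Prod.mk.eta, hblock]

theorem pr_doxG1_insert (ht : 1 ≤ t) (htT : t ≤ T) (hqx : ∀ u, ∑ x, qx x u = 1)
    (ha1 : ∀ x w, ∑ z, a1 z x w = 1) (hb1 : ∀ z x v, ∑ y, b1 y z x v = 1)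
    (ha : ∀ j, 2 ≤ j → j ≤ T → ∀ x w z' y', ∑ z, a j z x w z' y' = 1)
    (hb : ∀ j, 2 ≤ j → j ≤ T → ∀ z x v y', ∑ y, b j y z x v y' = 1)
    (hE : DependsOnPast t E) (hEx : FreeOfX t E) :
    pr (doxG1 T (insert t J) xs q1 qu qx qv qw a1 b1 a b) E =
      pr (doxG1 T J xs q1 qu qx qv qw a1 b1 a b) E := by
  rw [pr_doxG1 (ht.trans htT), pr_doxG1 (ht.trans htT)]
  refine sum_congr rfl fun u _ ↦ sum_congr rfl fun v _ ↦ sum_congr rfl fun w _ ↦ ?_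
  set g := Function.update (xFactor J xs qx) t 1
  have hgt : g t = 1 := Function.update_self ..
  have hgj (j : ℕ) (hj : j ≠ t) : xFactor J xs qx j = g j := (Function.update_of_ne hj ..).symm
  have hgj' (j : ℕ) (hj : j ≠ t) : xFactor (insert t J) xs qx j = g j := by
    rw [xFactor_insert_of_ne hj, hgj j hj]
  have hpr : DependsOn (fun x ↦ pr (pathWeight (zyKernel T a1 b1 a b v w x) default)
      (fun s ↦ E (.ofPaths u v w x s))) {idx T t}ᶜ := by
    intro x x' hxx'
    simp only [hEx u v w _ hxx']
    exact pr_pathWeight_congr (htT.trans T.le_succ)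
      (fun j _ hj ↦ sum_zyKernel ha1 hb1 ha hb (by omega))
      (fun j _ hj ↦ sum_zyKernel ha1 hb1 ha hb (by omega))
      (fun j hj ↦ zyKernel_congr (hxx' _ (idx_ne_idx (by omega) htT hj.ne))) default
      (hE u v w x')
  simp only [exoWeight_eq_mul ht htT hgj hgt, exoWeight_eq_mul ht htT hgj' hgt, mul_assoc]
  refine sum_apply_mul_eq_of_sum_eq (idx T t)
    ((sum_xFactor hqx t (u (idx T t))).trans (sum_xFactor hqx t (u (idx T t))).symm)
    fun x x' hxx' ↦ ?_
  rw [dependsOn_exoWeight ht htT hgt hxx']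
  exact congrArg _ (hpr hxx')

end Model

section Covariates

variable {U X V W Z Y : Type} {T t k : ℕ}

/-- A configuration `c = (x_{t+1:t+k}, w_{t:t+k}, v_{t:t+k}, z_{t-1}, S_{t-1})` of the covariates
`C1`. As in `histEv`, the pasts include the dummy time `0`. -/
@[ext]
structure Covariates (X V W Z Y : Type) (t k : ℕ) where
  xFuture : Fin k → X
  wBlock : Fin (k + 1) → W
  vBlock : Fin (k + 1) → V
  zPrev : Z
  yPast : Fin t → Y
  xPast : Fin t → X
  vPast : Fin t → V
  wPast : Fin t → W

namespace Covariates

/-- The event that the covariates of a trajectory are `c`. -/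
def Holds (c : Covariates X V W Z Y t k) (τ : Traj U X V W Z Y T) : Prop :=
  (∀ i : Fin k, τ.x (idx T (t + 1 + i.val)) = c.xFuture i) ∧
    (∀ i : Fin (k + 1), τ.w (idx T (t + i.val)) = c.wBlock i) ∧
    (∀ i : Fin (k + 1), τ.v (idx T (t + i.val)) = c.vBlock i) ∧
    τ.z (idx T (t - 1)) = c.zPrev ∧ histEv T t τ c.yPast c.xPast c.vPast c.wPast

/-- The covariates `C1` of a trajectory. -/
def ofTraj (t k : ℕ) (τ : Traj U X V W Z Y T) : Covariates X V W Z Y t k where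
  xFuture i := τ.x (idx T (t + 1 + i))
  wBlock i := τ.w (idx T (t + i))
  vBlock i := τ.v (idx T (t + i))
  zPrev := τ.z (idx T (t - 1))
  yPast i := τ.y (idx T i)
  xPast i := τ.x (idx T i)
  vPast i := τ.v (idx T i)
  wPast i := τ.w (idx T i)

theorem ofTraj_eq_iff {τ : Traj U X V W Z Y T} {c : Covariates X V W Z Y t k} :
    ofTraj t k τ = c ↔ c.Holds τ := by
  simp only [Covariates.ext_iff, funext_iff, ofTraj, Holds, histEv]

/-- A configuration as a tuple of its components. -/
def equivProd (X V W Z Y : Type) (t k : ℕ) : Covariates X V W Z Y t k ≃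
    (Fin k → X) × (Fin (k + 1) → W) × (Fin (k + 1) → V) × Z × (Fin t → Y) × (Fin t → X) ×
      (Fin t → V) × (Fin t → W) where
  toFun c := (c.xFuture, c.wBlock, c.vBlock, c.zPrev, c.yPast, c.xPast, c.vPast, c.wPast)
  invFun p := ⟨p.1, p.2.1, p.2.2.1, p.2.2.2.1, p.2.2.2.2.1, p.2.2.2.2.2.1, p.2.2.2.2.2.2.1,
    p.2.2.2.2.2.2.2⟩
  left_inv _ := rfl
  right_inv _ := rfl

instance [Fintype X] [Fintype V] [Fintype W] [Fintype Z] [Fintype Y] :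
    Fintype (Covariates X V W Z Y t k) :=
  Fintype.ofEquiv _ (equivProd X V W Z Y t k).symm

theorem sum_eq [Fintype X] [Fintype V] [Fintype W] [Fintype Z] [Fintype Y]
    (f : Covariates X V W Z Y t k → ℝ) :
    ∑ c, f c = ∑ hxf, ∑ hwk, ∑ hvk, ∑ z, ∑ hy, ∑ hx, ∑ hv, ∑ hw,
      f ⟨hxf, hwk, hvk, z, hy, hx, hv, hw⟩ := by
  rw [← (equivProd X V W Z Y t k).symm.sum_comp]
  simp only [Fintype.sum_prod_type]
  rfl

theorem dependsOnPast_holds (ht : 1 ≤ t) (c : Covariates X V W Z Y t k) :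
    DependsOnPast t (c.Holds : Traj U X V W Z Y T → Prop) := by
  intro u v w x s s' h
  have hs (j : ℕ) (hj : j < t) : s (idx T j) = s' (idx T j) := h _ ((min_le_left j T).trans_lt hj)
  simp only [Holds, histEv, Traj.ofPaths, hs _ (Nat.sub_one_lt_of_lt ht), hs _ (Fin.is_lt _)]

theorem freeOfX_holds (htT : t + k ≤ T) (c : Covariates X V W Z Y t k) :
    FreeOfX t (c.Holds : Traj U X V W Z Y T → Prop) := by
  intro u v w s x x' h
  have hx (j : ℕ) (hj : j ≤ T) (hjt : j ≠ t) : x (idx T j) = x' (idx T j) :=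
    h _ (idx_ne_idx hj (by omega) hjt)
  have hfuture (i : Fin k) : x (idx T (t + 1 + i)) = x' (idx T (t + 1 + i)) :=
    hx _ (by omega) (by omega)
  have hpast (i : Fin t) : x (idx T i) = x' (idx T i) := hx _ (by omega) (by omega)
  simp only [Holds, histEv, Traj.ofPaths, hfuture, hpast]

end Covariates

end Covariates

section Block

theorem extWith_eq_snoc {β : Type*} {k : ℕ} (g : Fin k → β) (l : β) :
    extWith k g l = Fin.snoc g l := by
  funext i
  cases i using Fin.lastCases <;> simp [extWith]

theorem shiftFirst_eq_cons {β : Type*} {k : ℕ} (r : β) (g : Fin k → β) :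
    shiftFirst k r g = Fin.cons r g := by
  funext i
  cases i using Fin.cases <;> simp [shiftFirst]

theorem pr_snd_last_eq {Z Y : Type*} [Fintype Z] [Fintype Y] {k : ℕ}
    (p : (Fin (k + 1) → Z × Y) → ℝ) (y : Y) :
    pr p (fun s ↦ (s (Fin.last k)).2 = y) =
      ∑ gy : Fin k → Y, ∑ gz : Fin (k + 1) → Z, p fun i ↦ (gz i, extWith k gy y i) := by
  classical
  rw [pr, ← (Equiv.arrowProdEquivProdArrow _ (fun _ ↦ Z) (fun _ ↦ Y)).symm.sum_comp,
    Fintype.sum_prod_type_right, ← (Fin.snocEquiv fun _ ↦ Y).sum_comp,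
    Fintype.sum_prod_type_right]
  refine sum_congr rfl fun gy _ ↦ ?_
  rw [sum_comm]
  refine sum_congr rfl fun gz _ ↦ ?_
  simp [Equiv.arrowProdEquivProdArrow, Fin.snocEquiv, extWith_eq_snoc]

theorem cons_castSucc_eq_shiftFirst {Z Y : Type*} {k : ℕ} (z : Z) (y y' : Y)
    (gz : Fin (k + 1) → Z) (gy : Fin k → Y) (i : Fin (k + 1)) :
    (Fin.cons (z, y) (fun l ↦ (gz l, extWith k gy y' l)) : Fin (k + 2) → Z × Y) i.castSucc =
      (shiftFirst k z (fun l ↦ gz l.castSucc) i, shiftFirst k y gy i) := by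
  rw [shiftFirst_eq_cons, shiftFirst_eq_cons, extWith_eq_snoc]
  cases i using Fin.cases with
  | zero => rfl
  | succ i => simp only [← Fin.succ_castSucc, Fin.cons_succ, Fin.snoc_castSucc]

end Block

section TruncatedFactorization

variable {U X V W Z Y : Type} {T t k : ℕ} {a1 : Z → X → W → ℝ} {b1 : Y → Z → X → V → ℝ}
  {a : ℕ → Z → X → W → Z → Y → ℝ} {b : ℕ → Y → Z → X → V → Y → ℝ} {xstar : X}
  {c : Covariates X V W Z Y t k} {τ : Traj U X V W Z Y T}

theorem Covariates.Holds.x_block (hc : c.Holds τ) (hx : τ.x (idx T t) = xstar)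
    (i : Fin (k + 1)) : τ.x (idx T (t + i)) = shiftFirst k xstar c.xFuture i := by
  rw [shiftFirst_eq_cons]
  cases i using Fin.cases with
  | zero => exact hx
  | succ i => simpa [Nat.add_right_comm, Nat.add_assoc] using hc.1 i

variable [Fintype Z] [Fintype Y]

/-- The probability of `y_{t+k} = y` along the chain of the times `t, …, t + k`, run from the past
recorded in `c` with `x_t = xstar`: the sum over `y_{t:t+k-1}` and `z_{t:t+k}` of the products of
the factors `b_j` and `a_j`. -/
def Covariates.outcomeProb (a : ℕ → Z → X → W → Z → Y → ℝ) (b : ℕ → Y → Z → X → V → Y → ℝ)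
    (xstar : X) (ht : 1 ≤ t) (c : Covariates X V W Z Y t k) (y : Y) : ℝ :=
  ∑ gy : Fin k → Y, ∑ gz : Fin (k + 1) → Z, ∏ i : Fin (k + 1),
    (b (t + i.val) (extWith k gy y i) (gz i) (shiftFirst k xstar c.xFuture i) (c.vBlock i)
        (shiftFirst k (c.yPast ⟨t - 1, by omega⟩) gy i) *
      a (t + i.val) (gz i) (shiftFirst k xstar c.xFuture i) (c.wBlock i)
        (shiftFirst k c.zPrev (fun l : Fin k ↦ gz l.castSucc) i)
        (shiftFirst k (c.yPast ⟨t - 1, by omega⟩) gy i))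

theorem Covariates.Holds.pr_pathWeight_zyKernel [DecidableEq Z] [DecidableEq Y] [Inhabited Z]
    [Inhabited Y] (ht : 2 ≤ t) (hc : c.Holds τ) (hx : τ.x (idx T t) = xstar) (y : Y) :
    pr (pathWeight (fun j ↦ zyKernel T a1 b1 a b τ.v τ.w τ.x (t + j))
        (τ.z (idx T (t - 1)), τ.y (idx T (t - 1))))
      (fun s : Fin (k + 1) → Z × Y ↦ (s (Fin.last k)).2 = y) =
      c.outcomeProb a b xstar (by omega) y := by
  obtain ⟨-, hw, hv, hz, hy, -⟩ := id hc
  have hy' : τ.y (idx T (t - 1)) = c.yPast ⟨t - 1, by omega⟩ := hy ⟨t - 1, by omega⟩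
  rw [pr_snd_last_eq]
  refine sum_congr rfl fun gy _ ↦ sum_congr rfl fun gz _ ↦ prod_congr rfl fun i _ ↦ ?_
  rw [cons_castSucc_eq_shiftFirst]
  beta_reduce
  rw [zyKernel_of_two_le (by omega), hc.x_block hx, hw, hv, hz, hy', mul_comm]

end TruncatedFactorization

section CausalEffect

variable {U X V W Z Y : Type}
  [Fintype U] [Fintype X] [Fintype V] [Fintype W] [Fintype Z] [Fintype Y]
  [DecidableEq U] [DecidableEq X] [DecidableEq V] [DecidableEq W] [DecidableEq Z] [DecidableEq Y]
  [Inhabited U] [Inhabited X] [Inhabited V] [Inhabited W] [Inhabited Z] [Inhabited Y]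
  {T t k : ℕ} {J : Finset ℕ} {xs : ℕ → X} {xstar : X}
  {q1 : U → ℝ} {qu : U → U → ℝ} {qx : X → U → ℝ} {qv : V → U → ℝ} {qw : W → U → ℝ}
  {a1 : Z → X → W → ℝ} {b1 : Y → Z → X → V → ℝ}
  {a : ℕ → Z → X → W → Z → Y → ℝ} {b : ℕ → Y → Z → X → V → Y → ℝ}

theorem pr_doxG1_outcome_and_covariates (ht : 2 ≤ t) (htkT : t + k ≤ T)
    (ha1 : ∀ x w, ∑ z, a1 z x w = 1) (hb1 : ∀ z x v, ∑ y, b1 y z x v = 1)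
    (ha : ∀ j, 2 ≤ j → j ≤ T → ∀ x w z' y', ∑ z, a j z x w z' y' = 1)
    (hb : ∀ j, 2 ≤ j → j ≤ T → ∀ z x v y', ∑ y, b j y z x v y' = 1)
    (c : Covariates X V W Z Y t k) (y : Y) :
    pr (doxG1 T J xs q1 qu qx qv qw a1 b1 a b)
        (fun τ ↦ τ.y (idx T (t + k)) = y ∧ τ.x (idx T t) = xstar ∧ c.Holds τ) =
      c.outcomeProb a b xstar (by omega) y * pr (doxG1 T J xs q1 qu qx qv qw a1 b1 a b)
        (fun τ ↦ τ.x (idx T t) = xstar ∧ c.Holds τ) :=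
  pr_doxG1_and_eq_mul (n := k + 1) (D := fun s ↦ (s (Fin.last k)).2 = y)
    (by omega) (by omega) (by omega) ha1 hb1 ha hb
    (fun u v w x _ _ hs ↦
      congrArg (x (idx T t) = xstar ∧ ·) (c.dependsOnPast_holds (by omega) u v w x hs))
    fun _ hτ ↦ hτ.2.pr_pathWeight_zyKernel ht hτ.1 y

theorem pr_doxG1_singleton_outcome (ht : 2 ≤ t) (htkT : t + k ≤ T)
    (hqx : ∀ u, ∑ x, qx x u = 1)
    (ha1 : ∀ x w, ∑ z, a1 z x w = 1) (hb1 : ∀ z x v, ∑ y, b1 y z x v = 1)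
    (ha : ∀ j, 2 ≤ j → j ≤ T → ∀ x w z' y', ∑ z, a j z x w z' y' = 1)
    (hb : ∀ j, 2 ≤ j → j ≤ T → ∀ z x v y', ∑ y, b j y z x v y' = 1) (y : Y) :
    pr (doxG1 T {t} (fun _ ↦ xstar) q1 qu qx qv qw a1 b1 a b)
        (fun τ ↦ τ.y (idx T (t + k)) = y) =
      ∑ c : Covariates X V W Z Y t k, c.outcomeProb a b xstar (by omega) y *
        pr (jointG1 T q1 qu qx qv qw a1 b1 a b) c.Holds := by
  rw [pr_eq_sum_pr_and_eq _ _ (Covariates.ofTraj t k)]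
  refine sum_congr rfl fun c _ ↦ ?_
  have hx (τ : Traj U X V W Z Y T)
      (hτ : doxG1 T {t} (fun _ ↦ xstar) q1 qu qx qv qw a1 b1 a b τ ≠ 0) :
      τ.x (idx T t) = xstar :=
    x_eq_of_doxG1_ne_zero (by omega) (by omega) (mem_singleton_self t) hτ
  calc pr (doxG1 T {t} (fun _ ↦ xstar) q1 qu qx qv qw a1 b1 a b)
        (fun τ ↦ τ.y (idx T (t + k)) = y ∧ Covariates.ofTraj t k τ = c)
      = pr (doxG1 T {t} (fun _ ↦ xstar) q1 qu qx qv qw a1 b1 a b)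
          (fun τ ↦ τ.y (idx T (t + k)) = y ∧ τ.x (idx T t) = xstar ∧ c.Holds τ) :=
        pr_congr_of_support fun τ hτ ↦ by simp only [Covariates.ofTraj_eq_iff, hx τ hτ, true_and]
    _ = c.outcomeProb a b xstar (by omega) y *
          pr (doxG1 T {t} (fun _ ↦ xstar) q1 qu qx qv qw a1 b1 a b)
            (fun τ ↦ τ.x (idx T t) = xstar ∧ c.Holds τ) :=
        pr_doxG1_outcome_and_covariates ht htkT ha1 hb1 ha hb c y
    _ = c.outcomeProb a b xstar (by omega) y *
          pr (doxG1 T {t} (fun _ ↦ xstar) q1 qu qx qv qw a1 b1 a b) c.Holds := by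
        congr 1
        exact pr_congr_of_support fun τ hτ ↦ by simp only [hx τ hτ, true_and]
    _ = c.outcomeProb a b xstar (by omega) y *
          pr (jointG1 T q1 qu qx qv qw a1 b1 a b) c.Holds := by
        rw [← insert_empty_eq t, pr_doxG1_insert (by omega) (by omega) hqx ha1 hb1 ha hb
          (c.dependsOnPast_holds (by omega)) (c.freeOfX_holds htkT), doxG1_empty]

theorem cpr_jointG1_mul_pr (ht : 2 ≤ t) (htkT : t + k ≤ T)
    (hnonneg : ∀ τ, 0 ≤ jointG1 T q1 qu qx qv qw a1 b1 a b τ)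
    (ha1 : ∀ x w, ∑ z, a1 z x w = 1) (hb1 : ∀ z x v, ∑ y, b1 y z x v = 1)
    (ha : ∀ j, 2 ≤ j → j ≤ T → ∀ x w z' y', ∑ z, a j z x w z' y' = 1)
    (hb : ∀ j, 2 ≤ j → j ≤ T → ∀ z x v y', ∑ y, b j y z x v y' = 1)
    {c : Covariates X V W Z Y t k}
    (hpos : 0 < pr (jointG1 T q1 qu qx qv qw a1 b1 a b) c.Holds →
      0 < pr (jointG1 T q1 qu qx qv qw a1 b1 a b) fun τ ↦ τ.x (idx T t) = xstar ∧ c.Holds τ)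
    (y : Y) :
    cpr (jointG1 T q1 qu qx qv qw a1 b1 a b) (fun τ ↦ τ.y (idx T (t + k)) = y)
        (fun τ ↦ τ.x (idx T t) = xstar ∧ c.Holds τ) *
      pr (jointG1 T q1 qu qx qv qw a1 b1 a b) c.Holds =
    c.outcomeProb a b xstar (by omega) y *
      pr (jointG1 T q1 qu qx qv qw a1 b1 a b) c.Holds := by
  refine cpr_mul_eq_of_pr_and_eq ?_ (pr_nonneg hnonneg _) hpos
  rw [← doxG1_empty (xs := fun _ ↦ xstar)]
  exact pr_doxG1_outcome_and_covariates ht htkT ha1 hb1 ha hb c y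

end CausalEffect

/-- Long-term causal effect of the atomic intervention do(x_t = x*),
graph G1: with C1 = (x_{t+1:t+k}, w_{t:t+k}, v_{t:t+k}, z_{t-1}, S_{t-1}) and assuming
P(x_t = x*, c) > 0 whenever P(c) > 0, for every value y:
P(y_{t+k} = y | do(x_t = x*)) = Σ_c P(y_{t+k} = y | x_t = x*, c) P(c)
  = Σ_c [Σ_{y_{t:t+k-1}, z_{t:t+k}} ∏_{j=t}^{t+k} b(y_j) a(z_j)] P(c),
with y_{t+k} = y held fixed, x_t = x*, and x_{t+1:t+k} taking the values given in c. -/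
theorem statement_3 {U X V W Z Y : Type}
    [Fintype U] [Fintype X] [Fintype V] [Fintype W] [Fintype Z] [Fintype Y]
    [DecidableEq U] [DecidableEq X] [DecidableEq V] [DecidableEq W] [DecidableEq Z]
    [DecidableEq Y]
    [Inhabited U] [Inhabited X] [Inhabited V] [Inhabited W] [Inhabited Z] [Inhabited Y]
    (T t k : ℕ) (ht2 : 2 ≤ t) (htkT : t + k ≤ T) (xstar : X)
    (q1 : U → ℝ) (qu : U → U → ℝ) (qx : X → U → ℝ) (qv : V → U → ℝ) (qw : W → U → ℝ)
    (a1 : Z → X → W → ℝ) (b1 : Y → Z → X → V → ℝ)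
    (a : ℕ → Z → X → W → Z → Y → ℝ) (b : ℕ → Y → Z → X → V → Y → ℝ)
    (hq1 : (∀ u', 0 ≤ q1 u') ∧ (∑ u', q1 u') = 1)
    (hqu : ∀ u0, (∀ u', 0 ≤ qu u' u0) ∧ (∑ u', qu u' u0) = 1)
    (hqx : ∀ u0, (∀ x', 0 ≤ qx x' u0) ∧ (∑ x', qx x' u0) = 1)
    (hqv : ∀ u0, (∀ v', 0 ≤ qv v' u0) ∧ (∑ v', qv v' u0) = 1)
    (hqw : ∀ u0, (∀ w', 0 ≤ qw w' u0) ∧ (∑ w', qw w' u0) = 1)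
    (ha1 : ∀ x0 w0, (∀ z', 0 ≤ a1 z' x0 w0) ∧ (∑ z', a1 z' x0 w0) = 1)
    (hb1 : ∀ z0 x0 v0, (∀ y', 0 ≤ b1 y' z0 x0 v0) ∧ (∑ y', b1 y' z0 x0 v0) = 1)
    (ha : ∀ j, 2 ≤ j → j ≤ T → ∀ x0 w0 z0 y0,
      (∀ z', 0 ≤ a j z' x0 w0 z0 y0) ∧ (∑ z', a j z' x0 w0 z0 y0) = 1)
    (hb : ∀ j, 2 ≤ j → j ≤ T → ∀ z0 x0 v0 y0,
      (∀ y', 0 ≤ b j y' z0 x0 v0 y0) ∧ (∑ y', b j y' z0 x0 v0 y0) = 1)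
    (hpos : ∀ (hxf : Fin k → X) (hwk : Fin (k + 1) → W) (hvk : Fin (k + 1) → V) (zt1 : Z)
        (hy : Fin t → Y) (hx : Fin t → X) (hv : Fin t → V) (hw : Fin t → W),
      0 < pr (jointG1 T q1 qu qx qv qw a1 b1 a b)
          (fun τ => (∀ i : Fin k, τ.x (idx T (t + 1 + i.val)) = hxf i) ∧
            (∀ i : Fin (k + 1), τ.w (idx T (t + i.val)) = hwk i) ∧
            (∀ i : Fin (k + 1), τ.v (idx T (t + i.val)) = hvk i) ∧
            τ.z (idx T (t - 1)) = zt1 ∧ histEv T t τ hy hx hv hw) →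
      0 < pr (jointG1 T q1 qu qx qv qw a1 b1 a b)
          (fun τ => τ.x (idx T t) = xstar ∧
            (∀ i : Fin k, τ.x (idx T (t + 1 + i.val)) = hxf i) ∧
            (∀ i : Fin (k + 1), τ.w (idx T (t + i.val)) = hwk i) ∧
            (∀ i : Fin (k + 1), τ.v (idx T (t + i.val)) = hvk i) ∧
            τ.z (idx T (t - 1)) = zt1 ∧ histEv T t τ hy hx hv hw)) :
    ∀ yv : Y,
      (pr (doxG1 T {t} (fun _ => xstar) q1 qu qx qv qw a1 b1 a b)
          (fun τ => τ.y (idx T (t + k)) = yv) =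
        ∑ hxf : Fin k → X, ∑ hwk : Fin (k + 1) → W, ∑ hvk : Fin (k + 1) → V, ∑ zt1 : Z,
          ∑ hy : Fin t → Y, ∑ hx : Fin t → X, ∑ hv : Fin t → V, ∑ hw : Fin t → W,
          cpr (jointG1 T q1 qu qx qv qw a1 b1 a b)
            (fun τ => τ.y (idx T (t + k)) = yv)
            (fun τ => τ.x (idx T t) = xstar ∧
              (∀ i : Fin k, τ.x (idx T (t + 1 + i.val)) = hxf i) ∧
              (∀ i : Fin (k + 1), τ.w (idx T (t + i.val)) = hwk i) ∧
              (∀ i : Fin (k + 1), τ.v (idx T (t + i.val)) = hvk i) ∧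
              τ.z (idx T (t - 1)) = zt1 ∧ histEv T t τ hy hx hv hw) *
          pr (jointG1 T q1 qu qx qv qw a1 b1 a b)
            (fun τ => (∀ i : Fin k, τ.x (idx T (t + 1 + i.val)) = hxf i) ∧
              (∀ i : Fin (k + 1), τ.w (idx T (t + i.val)) = hwk i) ∧
              (∀ i : Fin (k + 1), τ.v (idx T (t + i.val)) = hvk i) ∧
              τ.z (idx T (t - 1)) = zt1 ∧ histEv T t τ hy hx hv hw)) ∧
      (pr (doxG1 T {t} (fun _ => xstar) q1 qu qx qv qw a1 b1 a b)
          (fun τ => τ.y (idx T (t + k)) = yv) =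
        ∑ hxf : Fin k → X, ∑ hwk : Fin (k + 1) → W, ∑ hvk : Fin (k + 1) → V, ∑ zt1 : Z,
          ∑ hy : Fin t → Y, ∑ hx : Fin t → X, ∑ hv : Fin t → V, ∑ hw : Fin t → W,
          (∑ gy : Fin k → Y, ∑ gz : Fin (k + 1) → Z,
            ∏ i : Fin (k + 1),
              (b (t + i.val) (extWith k gy yv i) (gz i) (shiftFirst k xstar hxf i)
                  (hvk i) (shiftFirst k (hy ⟨t - 1, by omega⟩) gy i) *
                a (t + i.val) (gz i) (shiftFirst k xstar hxf i) (hwk i)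
                  (shiftFirst k zt1 (fun l : Fin k => gz l.castSucc) i)
                  (shiftFirst k (hy ⟨t - 1, by omega⟩) gy i))) *
          pr (jointG1 T q1 qu qx qv qw a1 b1 a b)
            (fun τ => (∀ i : Fin k, τ.x (idx T (t + 1 + i.val)) = hxf i) ∧
              (∀ i : Fin (k + 1), τ.w (idx T (t + i.val)) = hwk i) ∧
              (∀ i : Fin (k + 1), τ.v (idx T (t + i.val)) = hvk i) ∧
              τ.z (idx T (t - 1)) = zt1 ∧ histEv T t τ hy hx hv hw)) := by
  intro yv
  have hnonneg := jointG1_nonneg hq1.1 (fun u ↦ (hqu u).1) (fun u ↦ (hqx u).1)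
    (fun u ↦ (hqv u).1) (fun u ↦ (hqw u).1) (fun x w ↦ (ha1 x w).1) (fun z x v ↦ (hb1 z x v).1)
    (fun j h2j hjT x w z y ↦ (ha j h2j hjT x w z y).1)
    (fun j h2j hjT z x v y ↦ (hb j h2j hjT z x v y).1)
  have ha1_sum (x w) := (ha1 x w).2
  have hb1_sum (z x v) := (hb1 z x v).2
  have ha_sum (j h2j hjT x w z y) := (ha j h2j hjT x w z y).2
  have hb_sum (j h2j hjT z x v y) := (hb j h2j hjT z x v y).2
  have heffect := pr_doxG1_singleton_outcome (xstar := xstar) (q1 := q1) (qu := qu) (qv := qv)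
    (qw := qw) ht2 htkT (fun u ↦ (hqx u).2) ha1_sum hb1_sum ha_sum hb_sum yv
  have hcpr (c : Covariates X V W Z Y t k) := cpr_jointG1_mul_pr ht2 htkT hnonneg ha1_sum hb1_sum
    ha_sum hb_sum (hpos c.xFuture c.wBlock c.vBlock c.zPrev c.yPast c.xPast c.vPast c.wPast) yv
  refine ⟨?_, heffect.trans (Covariates.sum_eq _)⟩
  exact (heffect.trans (sum_congr rfl fun c _ ↦ (hcpr c).symm)).trans (Covariates.sum_eq _)
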